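/- Let n ≥ 1, let 0 ≤ t* < ε, and let R, R₁, R₂ : (t*, ε] → (symmetric n×n real matrices) be continuous with R₁(t) ≤ R(t) ≤ R₂(t) in the Loewner (positive semidefinite) order for all t ∈ (t*, ε]. Let H, H₁, H₂ : (t*, ε] → (symmetric n×n real matrices) be differentiable solutions of H' + H² + R = 0, H₁' + H₁² + R₁ = 0, and H₂' + H₂² + R₂ = 0, respectively, on (t*, ε], and assume H₁(ε) ≤ H(ε) ≤ H₂(ε) in the Loewner order. Then H₁(t) ≤ H(t) ≤ H₂(t) for all t ∈ (t*, ε]. -/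

import Mathlib

/-!
The difference `D = H - K` of two Riccati solutions satisfies `-D' ≥ K D + D K`, because
`H² - K² = K D + D K + D²` and `D² ≥ 0`. Such a Lyapunov inequality preserves `0 ≤ D` backwards in
time: to first order in `h`, `D (t - h)` dominates the conjugate
`(1 + h M)⋆ D(t) (1 + h M) ≥ 0`, and adding a small multiple of `exp ((C + 1) (b - t))`, where
`M⋆ + M ≤ C`, makes the inequality strict, so that the first-order term beats the error.
-/

open Set Filter Topology

theorem hasDerivAt_one_add_smul_mul_mul_one_add_smul {A : Type*} [NormedRing A]
    [NormedAlgebra ℝ A] (l x m : A) (t : ℝ) :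
    HasDerivAt (fun s : ℝ ↦ (1 + (t - s) • l) * x * (1 + (t - s) • m)) (-(l * x + x * m)) t := by
  have hasDerivAt_factor (y : A) : HasDerivAt (fun s : ℝ ↦ 1 + (t - s) • y) (-y) t := by
    simpa using (((hasDerivAt_id t).const_sub t).smul_const y).const_add 1
  refine (((hasDerivAt_factor l).mul_const x).mul (hasDerivAt_factor m)).congr_deriv ?_
  simp [add_comm]

theorem mul_sub_add_sub_mul_le_mul_self_sub {A : Type*} [Ring A] [StarRing A] [PartialOrder A]
    [StarOrderedRing A] {x y : A} (hxy : IsSelfAdjoint (x - y)) :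
    y * (x - y) + (x - y) * y ≤ x * x - y * y :=
  calc y * (x - y) + (x - y) * y ≤ y * (x - y) + (x - y) * y + (x - y) * (x - y) :=
        le_add_of_nonneg_right hxy.mul_self_nonneg
    _ = x * x - y * y := by noncomm_ring

theorem star_mul_add_mul_add_smul_one_le {A : Type*} [Ring A] [StarRing A] [Algebra ℝ A]
    [StarModule ℝ A] [PartialOrder A] [StarOrderedRing A] {x y m : A} {r C : ℝ} (hr : 0 ≤ r)
    (hm : star m + m ≤ C • 1) (hxy : star m * x + x * m ≤ y) :
    star m * (x + r • 1) + (x + r • 1) * m + r • 1 ≤ y + (r * (C + 1)) • 1 :=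
  calc star m * (x + r • 1) + (x + r • 1) * m + r • 1
      = star m * x + x * m + r • (star m + m + 1) := by
        simp only [mul_add, add_mul, mul_smul_comm, smul_mul_assoc, mul_one, one_mul, smul_add]
        abel
    _ ≤ y + r • (C • 1 + 1) := by gcongr
    _ = y + (r * (C + 1)) • 1 := by module

section OrderedStarAlgebra

-- Both complex unital C⋆-algebras and real square matrices satisfy these assumptions;
-- `CStarAlgebra` itself would exclude the latter.
variable {A : Type*} [NormedRing A] [StarRing A] [NormedAlgebra ℝ A] [PartialOrder A]
  [StarOrderedRing A] [IsometricContinuousFunctionalCalculus ℝ A IsSelfAdjoint]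

theorem neg_norm_smul_one_le {x : A} (hx : IsSelfAdjoint x) : -(‖x‖ • (1 : A)) ≤ x := by
  rw [← neg_smul, ← Algebra.algebraMap_eq_smul_one]
  exact algebraMap_le_of_le_spectrum fun r hr ↦
    neg_le_of_abs_le (IsometricContinuousFunctionalCalculus.norm_spectrum_le x hr)

theorem le_norm_smul_one {x : A} (hx : IsSelfAdjoint x) : x ≤ ‖x‖ • (1 : A) := by
  simpa using neg_norm_smul_one_le hx.neg

variable [StarModule ℝ A]

theorem nonneg_of_norm_sub_le {x p : A} {c : ℝ} (hx : IsSelfAdjoint x) (hp : c • 1 ≤ p)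
    (hxp : ‖x - p‖ ≤ c) : 0 ≤ x := by
  have hpsa : IsSelfAdjoint p := ((IsSelfAdjoint.all c).smul (.one A)).of_ge hp
  calc (0 : A) ≤ (c - ‖x - p‖) • 1 := smul_nonneg (sub_nonneg.mpr hxp) zero_le_one
    _ = c • 1 + -(‖x - p‖ • 1) := by rw [sub_smul, sub_eq_add_neg]
    _ ≤ p + (x - p) := add_le_add hp (neg_norm_smul_one_le (hx.sub hpsa))
    _ = x := add_sub_cancel p x

theorem eventually_nonneg_of_hasDerivWithinAt_neg {F : ℝ → A} {p : A} {t c : ℝ}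
    (hsa : ∀ᶠ s in 𝓝[<] t, IsSelfAdjoint (F s)) (hderiv : HasDerivWithinAt F (-p) (Iic t) t)
    (hFt : F t = 0) (hc : 0 < c) (hp : c • 1 ≤ p) : ∀ᶠ s in 𝓝[<] t, 0 ≤ F s := by
  have hslope : Tendsto (fun s ↦ (t - s)⁻¹ • F s) (𝓝[<] t) (𝓝 p) := by
    simpa [slope_def_module, hFt, ← neg_smul, ← inv_neg] using
      (hasDerivWithinAt_iff_tendsto_slope.mp hderiv).neg
  filter_upwards [hsa, hslope.eventually (Metric.ball_mem_nhds p hc), self_mem_nhdsWithin]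
    with s hFs hball hst
  have hts : 0 < t - s := sub_pos.mpr hst
  have hquot : 0 ≤ (t - s)⁻¹ • F s :=
    nonneg_of_norm_sub_le ((IsSelfAdjoint.all _).smul hFs) hp (mem_ball_iff_norm.mp hball).le
  rw [← smul_inv_smul₀ hts.ne' (F s)]
  exact smul_nonneg hts.le hquot

theorem eventually_nonneg_of_strict_lyapunov {D : ℝ → A} {D' m : A} {t c : ℝ}
    (hsa : ∀ᶠ s in 𝓝[<] t, IsSelfAdjoint (D s)) (hderiv : HasDerivWithinAt D (-D') (Iic t) t)
    (hDt : 0 ≤ D t) (hc : 0 < c) (hD' : star m * D t + D t * m + c • 1 ≤ D') :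
    ∀ᶠ s in 𝓝[<] t, 0 ≤ D s := by
  let G : ℝ → A := fun s ↦ (1 + (t - s) • star m) * D t * (1 + (t - s) • m)
  have hG (s : ℝ) : 0 ≤ G s := by
    simpa [G] using star_left_conjugate_nonneg hDt (1 + (t - s) • m)
  have hderivG := hasDerivAt_one_add_smul_mul_mul_one_add_smul (star m) (D t) m t
  have hDG : ∀ᶠ s in 𝓝[<] t, 0 ≤ (D - G) s := by
    refine eventually_nonneg_of_hasDerivWithinAt_neg (p := D' - (star m * D t + D t * m))
      (hsa.mono fun s hs ↦ hs.sub (.of_nonneg (hG s))) ?_ (by simp [G]) hc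
      (le_sub_iff_add_le'.mpr hD')
    refine (hderiv.sub hderivG.hasDerivWithinAt).congr_deriv ?_
    abel
  exact hDG.mono fun s hs ↦ (hG s).trans (sub_nonneg.mp hs)

variable [NonnegSpectrumClass ℝ A] [ContinuousStar A]

theorem isClosed_setOf_nonneg : IsClosed {x : A | 0 ≤ x} := by
  refine isClosed_of_closure_subset fun x hx ↦ ?_
  have hsa : IsSelfAdjoint x :=
    closure_minimal (fun y hy ↦ IsSelfAdjoint.of_nonneg hy)
      (isClosed_eq continuous_star continuous_id) hx
  have hlower (ε : ℝ) (hε : 0 < ε) : algebraMap ℝ A (-ε) ≤ x := by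
    obtain ⟨y, hy, hxy⟩ := Metric.mem_closure_iff.mp hx ε hε
    calc algebraMap ℝ A (-ε) = -(ε • 1) := by rw [Algebra.algebraMap_eq_smul_one, neg_smul]
      _ ≤ -(‖x - y‖ • 1) :=
        neg_le_neg (smul_le_smul_of_nonneg_right (dist_eq_norm x y ▸ hxy.le) zero_le_one)
      _ ≤ x - y := neg_norm_smul_one_le (hsa.sub (.of_nonneg hy))
      _ ≤ x := sub_le_self x hy
  simp only [algebraMap_le_iff_le_spectrum hsa] at hlower
  rw [mem_ofPred_eq, ← map_zero (algebraMap ℝ A), algebraMap_le_iff_le_spectrum hsa]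
  exact fun r hr ↦ le_of_forall_pos_le_add fun ε hε ↦ neg_le_iff_add_nonneg.mp (hlower ε hε r hr)

theorem nonneg_of_strict_lyapunov {D D' M : ℝ → A} {c : ℝ → ℝ} {a b : ℝ}
    (hcont : ContinuousOn D (Icc a b)) (hsa : ∀ t ∈ Icc a b, IsSelfAdjoint (D t))
    (hderiv : ∀ t ∈ Ioc a b, HasDerivWithinAt D (-D' t) (Iic t) t)
    (hc : ∀ t ∈ Ioc a b, 0 < c t)
    (hD' : ∀ t ∈ Ioc a b, star (M t) * D t + D t * M t + c t • 1 ≤ D' t)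
    (hb : 0 ≤ D b) : ∀ t ∈ Icc a b, 0 ≤ D t := by
  refine IsClosed.Icc_subset_of_forall_exists_lt (s := {t | 0 ≤ D t}) ?_ hb ?_
  · rw [inter_comm]
    exact hcont.preimage_isClosed_of_isClosed isClosed_Icc isClosed_setOf_nonneg
  · rintro t ⟨hDt, ht⟩ y hy
    have hsa_left : ∀ᶠ s in 𝓝[<] t, IsSelfAdjoint (D s) := by
      filter_upwards [Ico_mem_nhdsLT ht.1] with s hs using hsa s ⟨hs.1, hs.2.le.trans ht.2⟩
    have hnonneg_left :=
      eventually_nonneg_of_strict_lyapunov hsa_left (hderiv t ht) hDt (hc t ht) (hD' t ht)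
    exact (hnonneg_left.and (Ico_mem_nhdsLT hy)).exists

theorem nonneg_of_lyapunov {D D' M : ℝ → A} {a b C : ℝ}
    (hcont : ContinuousOn D (Icc a b)) (hsa : ∀ t ∈ Icc a b, IsSelfAdjoint (D t))
    (hderiv : ∀ t ∈ Ioc a b, HasDerivWithinAt D (-D' t) (Iic t) t)
    (hM : ∀ t ∈ Ioc a b, star (M t) + M t ≤ C • 1)
    (hD' : ∀ t ∈ Ioc a b, star (M t) * D t + D t * M t ≤ D' t)
    (hb : 0 ≤ D b) : ∀ t ∈ Icc a b, 0 ≤ D t := by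
  let g : ℝ → ℝ := fun t ↦ Real.exp ((C + 1) * (b - t))
  have hg (t : ℝ) : 0 < g t := Real.exp_pos _
  have hderivg (t : ℝ) : HasDerivAt g (-(g t * (C + 1))) t := by
    refine (((hasDerivAt_id t).const_sub b).const_mul (C + 1)).exp.congr_deriv ?_
    simp only [g, id]
    ring
  have hperturbed (δ : ℝ) (hδ : 0 < δ) : ∀ t ∈ Icc a b, 0 ≤ D t + (δ * g t) • 1 := by
    have hδg (t : ℝ) : 0 < δ * g t := mul_pos hδ (hg t)
    refine nonneg_of_strict_lyapunov (D' := fun t ↦ D' t + (δ * g t * (C + 1)) • 1)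
      (hcont.add (by fun_prop)) (fun t ht ↦ (hsa t ht).add ((IsSelfAdjoint.all _).smul (.one A)))
      ?_ (fun t _ ↦ hδg t)
      (fun t ht ↦ star_mul_add_mul_add_smul_one_le (hδg t).le (hM t ht) (hD' t ht))
      (add_nonneg hb (smul_nonneg (hδg b).le zero_le_one))
    intro t ht
    refine ((hderiv t ht).add
      (((hderivg t).const_mul δ).smul_const (1 : A)).hasDerivWithinAt).congr_deriv ?_
    module
  intro t ht
  have hlim : Tendsto (fun δ : ℝ ↦ D t + (δ * g t) • (1 : A)) (𝓝[>] 0) (𝓝 (D t)) :=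
    tendsto_nhdsWithin_of_tendsto_nhds (Continuous.tendsto' (by fun_prop) _ _ (by simp))
  refine isClosed_setOf_nonneg.mem_of_tendsto hlim ?_
  filter_upwards [self_mem_nhdsWithin] with δ hδ using hperturbed δ hδ t ht

theorem stmt_7_general {s : Set ℝ} (hs : s.OrdConnected) {b : ℝ} (hb : b ∈ s) {H K R Q : ℝ → A}
    (hHsa : ∀ t ∈ s, IsSelfAdjoint (H t)) (hKsa : ∀ t ∈ s, IsSelfAdjoint (K t))
    (hH : ∀ t ∈ s, HasDerivWithinAt H (-(H t * H t + R t)) s t)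
    (hK : ∀ t ∈ s, HasDerivWithinAt K (-(K t * K t + Q t)) s t)
    (hQR : ∀ t ∈ s, Q t ≤ R t) (hend : K b ≤ H b) : ∀ t ∈ s, t ≤ b → K t ≤ H t := by
  intro a ha hab
  have hIcc : Icc a b ⊆ s := hs.out ha hb
  have hIoc : Ioc a b ⊆ s := Ioc_subset_Icc_self.trans hIcc
  have hHcont : ContinuousOn H (Icc a b) := .mono (fun t ht ↦ (hH t ht).continuousWithinAt) hIcc
  have hKcont : ContinuousOn K (Icc a b) := .mono (fun t ht ↦ (hK t ht).continuousWithinAt) hIcc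
  have hDsa (t : ℝ) (ht : t ∈ s) : IsSelfAdjoint (H t - K t) := (hHsa t ht).sub (hKsa t ht)
  have hderiv (t : ℝ) (ht : t ∈ Ioc a b) : HasDerivWithinAt (fun u ↦ H u - K u)
      (-(H t * H t - K t * K t + (R t - Q t))) (Iic t) t := by
    have hleft : s ∈ 𝓝[≤] t := mem_of_superset (Icc_mem_nhdsLE_of_mem ht) hIcc
    refine (((hH t (hIoc ht)).sub (hK t (hIoc ht))).mono_of_mem_nhdsWithin hleft).congr_deriv ?_
    abel
  obtain ⟨C, hC⟩ := isCompact_Icc.exists_bound_of_continuousOn (hKcont.add hKcont)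
  have hKbound (t : ℝ) (ht : t ∈ Ioc a b) : star (K t) + K t ≤ C • 1 := by
    rw [hKsa t (hIoc ht)]
    exact (le_norm_smul_one ((hKsa t (hIoc ht)).add (hKsa t (hIoc ht)))).trans
      (smul_le_smul_of_nonneg_right (hC t (Ioc_subset_Icc_self ht)) zero_le_one)
  have hlyapunov (t : ℝ) (ht : t ∈ Ioc a b) : star (K t) * (H t - K t) + (H t - K t) * K t ≤
      H t * H t - K t * K t + (R t - Q t) := by
    rw [hKsa t (hIoc ht)]
    exact (mul_sub_add_sub_mul_le_mul_self_sub (hDsa t (hIoc ht))).trans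
      (le_add_of_nonneg_right (sub_nonneg.mpr (hQR t (hIoc ht))))
  exact sub_nonneg.mp (nonneg_of_lyapunov (hHcont.sub hKcont) (fun t ht ↦ hDsa t (hIcc ht))
    hderiv hKbound hlyapunov (sub_nonneg.mpr hend) a (left_mem_Icc.mpr hab))

end OrderedStarAlgebra

section Matrix

open scoped MatrixOrder Matrix.Norms.L2Operator

theorem hasDerivWithinAt_matrix_of_apply {m n 𝕜 : Type*} [Finite m] [Finite n]
    [RCLike 𝕜] {M : 𝕜 → Matrix m n 𝕜} {M' : Matrix m n 𝕜} {s : Set 𝕜} {t : 𝕜}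
    (h : ∀ i j, HasDerivWithinAt (fun u ↦ M u i j) (M' i j) s t) : HasDerivWithinAt M M' s t := by
  classical
  have := Fintype.ofFinite m
  have := Fintype.ofFinite n
  simp only [hasDerivWithinAt_iff_tendsto_slope] at h ⊢
  exact tendsto_pi_nhds.mpr fun i ↦ tendsto_pi_nhds.mpr (h i)

theorem posSemidef_sub_of_riccati {ι : Type*} [Fintype ι] {s : Set ℝ} (hs : s.OrdConnected)
    {b : ℝ} (hb : b ∈ s) {H K R Q : ℝ → Matrix ι ι ℝ}
    (hHsymm : ∀ t ∈ s, (H t).IsSymm) (hKsymm : ∀ t ∈ s, (K t).IsSymm)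
    (hH : ∀ t ∈ s, ∀ i j, HasDerivWithinAt (fun u ↦ H u i j) (-(H t * H t + R t) i j) s t)
    (hK : ∀ t ∈ s, ∀ i j, HasDerivWithinAt (fun u ↦ K u i j) (-(K t * K t + Q t) i j) s t)
    (hQR : ∀ t ∈ s, (R t - Q t).PosSemidef) (hend : (H b - K b).PosSemidef) :
    ∀ t ∈ s, t ≤ b → (H t - K t).PosSemidef := by
  classical
  exact stmt_7_general hs hb (fun t ht ↦ Matrix.isHermitian_iff_isSymm.mpr (hHsymm t ht))
    (fun t ht ↦ Matrix.isHermitian_iff_isSymm.mpr (hKsymm t ht))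
    (fun t ht ↦ hasDerivWithinAt_matrix_of_apply (hH t ht))
    (fun t ht ↦ hasDerivWithinAt_matrix_of_apply (hK t ht)) hQR hend

end Matrix

/-- Backwards matrix Riccati comparison: if `R₁ ≤ R ≤ R₂` in the Loewner
order, `H, H₁, H₂` solve the respective Riccati equations `Hᵢ' + Hᵢ² + Rᵢ = 0` on
`(t*, ε]`, and `H₁(ε) ≤ H(ε) ≤ H₂(ε)`, then `H₁(t) ≤ H(t) ≤ H₂(t)` on `(t*, ε]`. -/
theorem stmt_7 (n : ℕ) (hn : 1 ≤ n) (tstar ε : ℝ) (htstar : 0 ≤ tstar) (hε : tstar < ε)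
    (R R₁ R₂ H H₁ H₂ : ℝ → Matrix (Fin n) (Fin n) ℝ)
    (hRsymm : ∀ t ∈ Set.Ioc tstar ε, (R t).IsSymm ∧ (R₁ t).IsSymm ∧ (R₂ t).IsSymm)
    (hHsymm : ∀ t ∈ Set.Ioc tstar ε, (H t).IsSymm ∧ (H₁ t).IsSymm ∧ (H₂ t).IsSymm)
    (hcont : ∀ i j, ContinuousOn (fun t => R t i j) (Set.Ioc tstar ε) ∧
      ContinuousOn (fun t => R₁ t i j) (Set.Ioc tstar ε) ∧
      ContinuousOn (fun t => R₂ t i j) (Set.Ioc tstar ε))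
    (horder : ∀ t ∈ Set.Ioc tstar ε, (R t - R₁ t).PosSemidef ∧ (R₂ t - R t).PosSemidef)
    (hH : ∀ t ∈ Set.Ioc tstar ε, ∀ i j,
      HasDerivWithinAt (fun s => H s i j) (-(H t * H t + R t) i j) (Set.Ioc tstar ε) t)
    (hH₁ : ∀ t ∈ Set.Ioc tstar ε, ∀ i j,
      HasDerivWithinAt (fun s => H₁ s i j) (-(H₁ t * H₁ t + R₁ t) i j) (Set.Ioc tstar ε) t)
    (hH₂ : ∀ t ∈ Set.Ioc tstar ε, ∀ i j,
      HasDerivWithinAt (fun s => H₂ s i j) (-(H₂ t * H₂ t + R₂ t) i j) (Set.Ioc tstar ε) t)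
    (hend : (H ε - H₁ ε).PosSemidef ∧ (H₂ ε - H ε).PosSemidef) :
    ∀ t ∈ Set.Ioc tstar ε, (H t - H₁ t).PosSemidef ∧ (H₂ t - H t).PosSemidef := by
  have lower := posSemidef_sub_of_riccati ordConnected_Ioc (right_mem_Ioc.mpr hε)
    (fun t ht ↦ (hHsymm t ht).1) (fun t ht ↦ (hHsymm t ht).2.1) hH hH₁
    (fun t ht ↦ (horder t ht).1) hend.1
  have upper := posSemidef_sub_of_riccati ordConnected_Ioc (right_mem_Ioc.mpr hε)
    (fun t ht ↦ (hHsymm t ht).2.2) (fun t ht ↦ (hHsymm t ht).1) hH₂ hH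
    (fun t ht ↦ (horder t ht).2) hend.2
  exact fun t ht ↦ ⟨lower t ht ht.2, upper t ht ht.2⟩
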